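/- arXiv:1406.7027 — 4 statements merged into one kernel-verified Lean document; each statement's English description precedes it below -/
import Mathlib

section
/- Let X be a compact metric space, f : X → X continuous, φ : X → ℝ continuous, and let μ be an ergodic f-invariant Borel probability measure with ∫ φ dμ = 0. Then for μ-almost every x ∈ X there exists a sequence of integers n_k → ∞ such that f^{n_k}(x) → x and S_{n_k}f(x) → 0. -/
/-! The pair `(f^[n] x, S_n x)` is the orbit of `(x, 0)` under the skew product
`T (x, t) = (f x, t + φ x)`, which preserves `μ × Lebesgue` on `X × ℝ`. This measure is infinite,
so Poincaré recurrence requires `T` to be conservative. The mean ergodic theorem in `L¹` gives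
`S_n = o(n)` in measure. Hence the first `n` preimages of a wandering set of bounded height, which
are disjoint and all of the same measure, lie up to small exceptional sets in a window
`X × [-o(n), o(n)]` of measure `o(n)`; the wandering set is therefore null. Recurrence of `T` at
`(x, t)` is, after a vertical translation by `-t`, recurrence at `(x, 0)`. -/

open MeasureTheory Filter Topology

section WanderingSets

variable {X : Type*} {f : X → X} {s t : Set X}

/-- A *wandering set* of a self-map: no point of it ever returns to it. -/
def IsWandering (f : X → X) (s : Set X) : Prop :=
  ∀ x ∈ s, ∀ m ≠ 0, f^[m] x ∉ s

lemma IsWandering.mono (ht : IsWandering f t) (hst : s ⊆ t) : IsWandering f s :=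
  fun x hx m hm hmx ↦ ht x (hst hx) m hm (hst hmx)

lemma IsWandering.pairwise_disjoint_preimage_iterate (hs : IsWandering f s) :
    Pairwise (Function.onFun Disjoint fun n ↦ f^[n] ⁻¹' s) := by
  refine (pairwise_disjoint_on _).2 fun i j hij ↦ ?_
  refine Set.disjoint_left.2 fun x hi hj ↦ hs _ hi (j - i) (Nat.sub_ne_zero_of_lt hij) ?_
  rwa [← Function.iterate_add_apply, Nat.sub_add_cancel hij.le]

lemma IsWandering.natCast_mul_measure_le [MeasurableSpace X] {μ : Measure X}
    (hs : IsWandering f s) (hf : MeasurePreserving f μ μ) (hsm : MeasurableSet s)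
    (w : Set X) (n : ℕ) :
    n * μ s ≤ μ w + ∑ i ∈ Finset.range n, μ (f^[i] ⁻¹' s \ w) := by
  have hfs (i : ℕ) : MeasurableSet (f^[i] ⁻¹' s) := (hf.iterate i).measurable hsm
  have inter_le : ∑ i ∈ Finset.range n, μ (f^[i] ⁻¹' s ∩ w) ≤ μ w := by
    simpa [Measure.restrict_apply (hfs _)] using
      sum_measure_le_measure_univ (μ := μ.restrict w) (s := Finset.range n)
        (fun i _ ↦ (hfs i).nullMeasurableSet)
        fun i _ j _ hij ↦ (hs.pairwise_disjoint_preimage_iterate hij).aedisjoint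
  calc
    n * μ s = ∑ i ∈ Finset.range n, μ (f^[i] ⁻¹' s) := by
      simp [(hf.iterate _).measure_preimage hsm.nullMeasurableSet]
    _ ≤ ∑ i ∈ Finset.range n, (μ (f^[i] ⁻¹' s ∩ w) + μ (f^[i] ⁻¹' s \ w)) :=
      Finset.sum_le_sum fun i _ ↦ measure_le_inter_add_sdiff μ _ w
    _ ≤ μ w + ∑ i ∈ Finset.range n, μ (f^[i] ⁻¹' s \ w) := by
      rw [Finset.sum_add_distrib]
      gcongr

end WanderingSets

section SkewProduct

variable {X G : Type*}

/-- The skew product over `f` with fibre `G` and cocycle `φ`, i.e. `(x, t) ↦ (f x, t + φ x)`.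
The cocycle acts by translation on the right, to match `birkhoffSum_succ`. -/
def skewShift [Add G] (f : X → X) (φ : X → G) (p : X × G) : X × G :=
  (f p.1, p.2 + φ p.1)

lemma skewShift_iterate [AddCommMonoid G] (f : X → X) (φ : X → G) (n : ℕ) :
    (skewShift f φ)^[n] = skewShift f^[n] (birkhoffSum f φ n) := by
  induction n with
  | zero => ext p <;> simp [skewShift]
  | succ n ih =>
    ext p <;> simp [Function.iterate_succ', ih, skewShift, birkhoffSum_succ, add_assoc,
      -Function.iterate_succ]

lemma natCast_mul_norm_birkhoffAverage [NormedAddCommGroup G] [NormedSpace ℝ G]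
    (f : X → X) (φ : X → G) (n : ℕ) (x : X) :
    n * ‖birkhoffAverage ℝ f φ n x‖ = ‖birkhoffSum f φ n x‖ := by
  rcases eq_or_ne n 0 with rfl | hn
  · simp
  · rw [birkhoffAverage, norm_smul, norm_inv, Real.norm_natCast, mul_inv_cancel_left₀]
    exact_mod_cast hn

variable [MeasurableSpace X] {μ : Measure X} [SFinite μ] [MeasurableSpace G]
  {f : X → X} {φ : X → G}

lemma measurePreserving_skewShift [Add G] [MeasurableAdd₂ G] {ν : Measure G} [SFinite ν]
    [ν.IsAddRightInvariant] (hf : MeasurePreserving f μ μ) (hφ : Measurable φ) :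
    MeasurePreserving (skewShift f φ) (μ.prod ν) (μ.prod ν) :=
  hf.skew_product (g := fun x t ↦ t + φ x)
    (measurable_snd.add (hφ.comp measurable_fst))
    (ae_of_all _ fun x ↦ map_add_right_eq_self ν (φ x))

lemma measure_skewShift_preimage_diff_le [NormedAddCommGroup G] [OpensMeasurableSpace G]
    [MeasurableAdd₂ G] {ν : Measure G} [SFinite ν] [ν.IsAddRightInvariant] (hφ : Measurable φ)
    {s : Set (X × G)} {K : ℝ} (hs : s ⊆ Set.univ ×ˢ Metric.closedBall 0 K) (R : ℝ) :
    (μ.prod ν) (skewShift f φ ⁻¹' s \ Set.univ ×ˢ Metric.closedBall 0 (K + R)) ≤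
      μ {x | R ≤ ‖φ x‖} * ν (Metric.closedBall 0 K) := by
  have hsub : skewShift f φ ⁻¹' s \ Set.univ ×ˢ Metric.closedBall 0 (K + R) ⊆
      skewShift id φ ⁻¹' ({x | R ≤ ‖φ x‖} ×ˢ Metric.closedBall 0 K) := by
    rintro ⟨x, t⟩ ⟨hst, hw⟩
    have hK : ‖t + φ x‖ ≤ K := by simpa [skewShift] using (hs hst).2
    have ht : K + R < ‖t‖ := by simpa using hw
    have htri : ‖t‖ ≤ ‖t + φ x‖ + ‖φ x‖ := by simpa using norm_sub_le (t + φ x) (φ x)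
    have hR : R ≤ ‖φ x‖ := by linarith
    simpa [skewShift] using ⟨hR, hK⟩
  have hmeas : MeasurableSet ({x | R ≤ ‖φ x‖} ×ˢ Metric.closedBall (0 : G) K) :=
    (measurableSet_le measurable_const hφ.norm).prod measurableSet_closedBall
  calc
    _ ≤ (μ.prod ν) (skewShift id φ ⁻¹' ({x | R ≤ ‖φ x‖} ×ˢ Metric.closedBall 0 K)) :=
      measure_mono hsub
    _ = (μ.prod ν) ({x | R ≤ ‖φ x‖} ×ˢ Metric.closedBall 0 K) :=
      (measurePreserving_skewShift (.id μ) hφ).measure_preimage hmeas.nullMeasurableSet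
    _ = μ {x | R ≤ ‖φ x‖} * ν (Metric.closedBall 0 K) := Measure.prod_prod ..

lemma measure_skewShift_iterate_preimage_diff_le [NormedAddCommGroup G] [NormedSpace ℝ G]
    [OpensMeasurableSpace G] [MeasurableAdd₂ G] {ν : Measure G} [SFinite ν] [ν.IsAddRightInvariant]
    (hf : Measurable f) (hφ : Measurable φ) {s : Set (X × G)} {K : ℝ}
    (hs : s ⊆ Set.univ ×ˢ Metric.closedBall 0 K) (δ : ℝ) {i n : ℕ} (hin : i < n) :
    (μ.prod ν) ((skewShift f φ)^[i] ⁻¹' s \ Set.univ ×ˢ Metric.closedBall 0 (K + n * δ)) ≤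
      μ {x | δ ≤ ‖birkhoffAverage ℝ f φ i x‖} * ν (Metric.closedBall 0 K) := by
  have hφi : Measurable (birkhoffSum f φ i) :=
    Finset.measurable_fun_sum _ fun j _ ↦ hφ.comp (hf.iterate j)
  have hsub : {x | n * δ ≤ ‖birkhoffSum f φ i x‖} ⊆ {x | δ ≤ ‖birkhoffAverage ℝ f φ i x‖} := by
    intro x (hx : n * δ ≤ ‖birkhoffSum f φ i x‖)
    have hn : (0 : ℝ) < n := by exact_mod_cast i.zero_le.trans_lt hin
    refine le_of_mul_le_mul_left ?_ hn
    calc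
      n * δ ≤ i * ‖birkhoffAverage ℝ f φ i x‖ := by rwa [natCast_mul_norm_birkhoffAverage]
      _ ≤ n * ‖birkhoffAverage ℝ f φ i x‖ := by gcongr
  rw [skewShift_iterate]
  exact (measure_skewShift_preimage_diff_le hφi hs _).trans <|
    mul_le_mul_left (measure_mono hsub) _

end SkewProduct

section Recurrence

variable {X : Type*} [MeasurableSpace X] {μ : Measure X} [IsFiniteMeasure μ]
  {f : X → X} {φ : X → ℝ} {s : Set (X × ℝ)} {K : ℝ}

lemma IsWandering.natCast_mul_measureReal_skewShift_le (hs : IsWandering (skewShift f φ) s)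
    (hsm : MeasurableSet s) (hf : MeasurePreserving f μ μ) (hφ : Measurable φ) (hK : 0 ≤ K)
    (hsK : s ⊆ Set.univ ×ˢ Metric.closedBall 0 K) {δ : ℝ} (hδ : 0 ≤ δ) (n : ℕ) :
    n * (μ.prod volume).real s ≤ μ.real Set.univ * (2 * (K + n * δ)) +
      (∑ i ∈ Finset.range n, μ.real {x | δ ≤ ‖birkhoffAverage ℝ f φ i x‖}) * (2 * K) := by
  have hbound : n * (μ.prod volume) s ≤
      μ Set.univ * volume (Metric.closedBall (0 : ℝ) (K + n * δ)) +
        (∑ i ∈ Finset.range n, μ {x | δ ≤ ‖birkhoffAverage ℝ f φ i x‖}) *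
          volume (Metric.closedBall (0 : ℝ) K) := by
    rw [← Measure.prod_prod, Finset.sum_mul]
    refine (hs.natCast_mul_measure_le (measurePreserving_skewShift hf hφ) hsm
      (Set.univ ×ˢ Metric.closedBall 0 (K + n * δ)) n).trans ?_
    gcongr with i hi
    exact measure_skewShift_iterate_preimage_diff_le hf.measurable hφ hsK δ (Finset.mem_range.1 hi)
  simp only [Real.volume_closedBall] at hbound
  have hwindow : μ Set.univ * ENNReal.ofReal (2 * (K + n * δ)) ≠ ⊤ :=
    ENNReal.mul_ne_top (measure_ne_top μ _) ENNReal.ofReal_ne_top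
  have hdev : (∑ i ∈ Finset.range n, μ {x | δ ≤ ‖birkhoffAverage ℝ f φ i x‖}) *
      ENNReal.ofReal (2 * K) ≠ ⊤ :=
    ENNReal.mul_ne_top (ENNReal.sum_ne_top.2 fun _ _ ↦ measure_ne_top μ _) ENNReal.ofReal_ne_top
  have hreal := ENNReal.toReal_mono (ENNReal.add_ne_top.2 ⟨hwindow, hdev⟩) hbound
  rwa [ENNReal.toReal_add hwindow hdev, ENNReal.toReal_mul, ENNReal.toReal_mul,
    ENNReal.toReal_mul, ENNReal.toReal_natCast, ENNReal.toReal_sum fun _ _ ↦ measure_ne_top μ _,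
    ENNReal.toReal_ofReal (by positivity), ENNReal.toReal_ofReal (by positivity)] at hreal

lemma IsWandering.measure_skewShift_eq_zero_of_subset (hs : IsWandering (skewShift f φ) s)
    (hsm : MeasurableSet s) (hf : MeasurePreserving f μ μ) (hφ : Measurable φ)
    (hA : TendstoInMeasure μ (birkhoffAverage ℝ f φ) atTop 0) (hK : 0 ≤ K)
    (hsK : s ⊆ Set.univ ×ˢ Metric.closedBall 0 K) :
    (μ.prod volume) s = 0 := by
  have hfin : (μ.prod volume) s ≠ ⊤ := by
    refine measure_ne_top_of_subset hsK ?_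
    rw [Measure.prod_prod]
    exact ENNReal.mul_ne_top (measure_ne_top μ _) measure_closedBall_lt_top.ne
  have hle {δ : ℝ} (hδ : 0 < δ) : (μ.prod volume).real s ≤ μ.real Set.univ * (2 * δ) := by
    have hdev : Tendsto (fun n ↦ μ.real {x | δ ≤ ‖birkhoffAverage ℝ f φ n x‖}) atTop (𝓝 0) := by
      simpa using tendstoInMeasure_iff_measureReal_norm.1 hA δ hδ
    have hlim : Tendsto (fun n : ℕ ↦ μ.real Set.univ * (2 * (K * (n : ℝ)⁻¹ + δ)) +
        ((n : ℝ)⁻¹ * ∑ i ∈ Finset.range n, μ.real {x | δ ≤ ‖birkhoffAverage ℝ f φ i x‖}) *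
          (2 * K)) atTop (𝓝 (μ.real Set.univ * (2 * δ))) := by
      simpa using ((((tendsto_inv_atTop_nhds_zero_nat (𝕜 := ℝ)).const_mul K).add_const
        δ).const_mul 2 |>.const_mul (μ.real Set.univ)).add (hdev.cesaro.mul_const (2 * K))
    refine ge_of_tendsto hlim ((eventually_gt_atTop 0).mono fun n hn ↦ ?_)
    have hn : (0 : ℝ) < n := by exact_mod_cast hn
    refine le_of_mul_le_mul_left ((hs.natCast_mul_measureReal_skewShift_le hsm hf hφ hK hsK hδ.le
      n).trans_eq ?_) hn
    field_simp
  refine (measureReal_eq_zero_iff hfin).1 (le_antisymm ?_ measureReal_nonneg)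
  have hlim : Tendsto (fun δ : ℝ ↦ μ.real Set.univ * (2 * δ)) (𝓝[>] 0) (𝓝 0) :=
    tendsto_nhdsWithin_of_tendsto_nhds (Continuous.tendsto' (by fun_prop) _ _ (by simp))
  exact ge_of_tendsto hlim (eventually_mem_nhdsWithin.mono fun _ ↦ hle)

lemma conservative_skewShift (hf : MeasurePreserving f μ μ) (hφ : Measurable φ)
    (hA : TendstoInMeasure μ (birkhoffAverage ℝ f φ) atTop 0) :
    Conservative (skewShift f φ) (μ.prod volume) where
  toQuasiMeasurePreserving := (measurePreserving_skewShift hf hφ).quasiMeasurePreserving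
  exists_mem_iterate_mem' s hsm hs₀ := by
    contrapose! hs₀
    have hs : IsWandering (skewShift f φ) s := hs₀
    have hcover : s = ⋃ K : ℕ, s ∩ Set.univ ×ˢ Metric.closedBall 0 (K : ℝ) := by
      rw [← Set.inter_iUnion, ← Set.prod_iUnion, Metric.iUnion_closedBall_nat, Set.univ_prod_univ,
        Set.inter_univ]
    rw [hcover, measure_iUnion_null_iff]
    exact fun K ↦ (hs.mono Set.inter_subset_left).measure_skewShift_eq_zero_of_subset
      (hsm.inter (MeasurableSet.univ.prod measurableSet_closedBall)) hf hφ hA K.cast_nonneg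
      Set.inter_subset_right

lemma ae_mapClusterPt_iterate_birkhoffSum [TopologicalSpace X] [SecondCountableTopology X]
    [OpensMeasurableSpace X] (hf : MeasurePreserving f μ μ) (hφ : Measurable φ)
    (hA : TendstoInMeasure μ (birkhoffAverage ℝ f φ) atTop 0) :
    ∀ᵐ x ∂μ, MapClusterPt (x, 0) atTop fun n ↦ (f^[n] x, birkhoffSum f φ n x) := by
  have hrec : ∀ᵐ p ∂μ.prod volume, MapClusterPt p atTop fun n ↦ (skewShift f φ)^[n] p :=
    (conservative_skewShift hf hφ hA).ae_frequently_mem_of_mem_nhds.mono fun _ hp ↦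
      mapClusterPt_iff_frequently.2 hp
  filter_upwards [Measure.ae_ae_of_ae_prod hrec] with x hx
  obtain ⟨t, ht⟩ := hx.exists
  have hshift : ContinuousAt (fun p : X × ℝ ↦ (p.1, p.2 - t)) (x, t) := by fun_prop
  simpa [Function.comp_def, skewShift_iterate, skewShift] using ht.continuousAt_comp hshift

lemma ae_exists_tendsto_birkhoffSum_zero_of_tendstoInMeasure [TopologicalSpace X]
    [SecondCountableTopology X] [OpensMeasurableSpace X] (hf : MeasurePreserving f μ μ)
    (hφ : AEMeasurable φ μ) (hA : TendstoInMeasure μ (birkhoffAverage ℝ f φ) atTop 0) :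
    ∀ᵐ x ∂μ, ∃ n : ℕ → ℕ, Tendsto n atTop atTop ∧
      Tendsto (fun k ↦ f^[n k] x) atTop (𝓝 x) ∧
      Tendsto (fun k ↦ birkhoffSum f φ (n k) x) atTop (𝓝 0) := by
  have hfq := hf.quasiMeasurePreserving
  have hA' : TendstoInMeasure μ (birkhoffAverage ℝ f (hφ.mk φ)) atTop 0 :=
    hA.congr_left fun n ↦ hfq.birkhoffAverage_ae_eq_of_ae_eq ℝ hφ.ae_eq_mk n
  filter_upwards [ae_mapClusterPt_iterate_birkhoffSum hf hφ.measurable_mk hA',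
    ae_all_iff.2 fun n ↦ hfq.birkhoffSum_ae_eq_of_ae_eq hφ.ae_eq_mk n] with x hx hsum
  obtain ⟨n, hn, hlim⟩ := hx.tendsto_subseq
  rw [nhds_prod_eq] at hlim
  exact ⟨n, hn.tendsto_atTop, hlim.fst, by simpa [Function.comp_def, hsum] using hlim.snd⟩

end Recurrence

section MeanErgodic

open scoped ENNReal

variable {X E : Type*} [MeasurableSpace X] {μ : Measure X} [NormedAddCommGroup E]
  [NormedSpace ℝ E] {f : X → X} {p : ℝ≥0∞}

lemma memLp_birkhoffAverage (hf : MeasurePreserving f μ μ) {φ : X → E} (hφ : MemLp φ p μ)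
    (n : ℕ) : MemLp (birkhoffAverage ℝ f φ n) p μ :=
  (memLp_finsetSum (Finset.range n) fun i _ ↦
    hφ.comp_measurePreserving (hf.iterate i)).const_smul (n : ℝ)⁻¹

lemma birkhoffAverage_compMeasurePreserving_toLp (hf : MeasurePreserving f μ μ) {φ : X → E}
    (hφ : MemLp φ p μ) (n : ℕ) :
    birkhoffAverage ℝ (Lp.compMeasurePreserving f hf) id n (hφ.toLp φ) =
      (memLp_birkhoffAverage hf hφ n).toLp (birkhoffAverage ℝ f φ n) := by
  have hiter (i : ℕ) : (Lp.compMeasurePreserving f hf)^[i] (hφ.toLp φ) =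
      (hφ.comp_measurePreserving (hf.iterate i)).toLp (φ ∘ f^[i]) := by
    rw [Lp.compMeasurePreserving_iterate, Lp.toLp_compMeasurePreserving]
  have hae : ∀ᵐ x ∂μ, ∀ i, (hφ.comp_measurePreserving (hf.iterate i)).toLp (φ ∘ f^[i]) x =
      φ (f^[i] x) := ae_all_iff.2 fun i ↦ MemLp.coeFn_toLp _
  ext1
  simp only [birkhoffAverage, birkhoffSum, id, hiter]
  filter_upwards [hae, (memLp_birkhoffAverage hf hφ n).coeFn_toLp, Lp.coeFn_smul (n : ℝ)⁻¹
    (∑ i ∈ Finset.range n, (hφ.comp_measurePreserving (hf.iterate i)).toLp (φ ∘ f^[i])),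
    Lp.coeFn_finsetSum (Finset.range n)
      fun i ↦ (hφ.comp_measurePreserving (hf.iterate i)).toLp (φ ∘ f^[i])]
    with x hx havg hsmul hsum
  rw [hsmul, Pi.smul_apply, hsum, Finset.sum_apply]
  simp only [hx]
  exact havg.symm

lemma tendsto_birkhoffAverage_compMeasurePreserving_toLp_iff [IsFiniteMeasure μ] [Fact (1 ≤ p)]
    (hf : MeasurePreserving f μ μ) {φ : X → E} (hφ : MemLp φ p μ) (c : E) :
    Tendsto (birkhoffAverage ℝ (Lp.compMeasurePreserving f hf) id · (hφ.toLp φ)) atTop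
        (𝓝 (Lp.const p μ c)) ↔
      Tendsto (fun n ↦ eLpNorm (birkhoffAverage ℝ f φ n - fun _ ↦ c) p μ) atTop (𝓝 0) := by
  simp only [birkhoffAverage_compMeasurePreserving_toLp]
  exact Lp.tendsto_Lp_iff_tendsto_eLpNorm'' _ (memLp_birkhoffAverage hf hφ) _ (memLp_const c)

lemma isClosed_setOf_tendsto_birkhoffAverage_compMeasurePreserving [IsFiniteMeasure μ]
    (hf : MeasurePreserving f μ μ) :
    IsClosed {u : Lp E 1 μ | Tendsto
      (birkhoffAverage ℝ (Lp.compMeasurePreserving f hf) id · u) atTop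
        (𝓝 (Lp.const 1 μ (⨍ x, u x ∂μ)))} := by
  have hconst : Continuous fun u : Lp E 1 μ ↦ Lp.const 1 μ (⨍ x, u x ∂μ) := by
    simp only [average_eq]
    exact (Lp.constL 1 μ ℝ).continuous.comp
      (continuous_integral.const_smul (μ.real Set.univ)⁻¹)
  exact isClosed_setOfPred_tendsto_birkhoffAverage ℝ
    (Lp.isometry_compMeasurePreserving hf).lipschitz uniformContinuous_id hconst

variable [IsFiniteMeasure μ] {φ : X → ℝ}

lemma inner_toLp_sub_average_eq_zero (hf : Ergodic f μ) (hφ : MemLp φ 2 μ) {v : Lp ℝ 2 μ}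
    (hv : Lp.compMeasurePreserving f hf.toMeasurePreserving v = v) :
    inner ℝ v (hφ.toLp φ - Lp.const 2 μ (⨍ x, φ x ∂μ)) = 0 := by
  have hvf : v ∘ f =ᵐ[μ] v := by
    simpa only [hv] using (Lp.coeFn_compMeasurePreserving v hf.toMeasurePreserving).symm
  obtain ⟨c, hc⟩ := hf.ae_eq_const_of_ae_eq_comp_ae (Lp.aestronglyMeasurable v) hvf
  calc
    inner ℝ v (hφ.toLp φ - Lp.const 2 μ (⨍ x, φ x ∂μ)) =
        ∫ x, c * (φ x - ⨍ y, φ y ∂μ) ∂μ := by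
      rw [L2.inner_def]
      refine integral_congr_ae ?_
      filter_upwards [hc, hφ.coeFn_toLp, Lp.coeFn_const 2 μ (⨍ x, φ x ∂μ),
        Lp.coeFn_sub (hφ.toLp φ) (Lp.const 2 μ (⨍ x, φ x ∂μ))] with x hvx hφx hconst hsub
      rw [hsub, Pi.sub_apply, hvx, hφx, hconst, RCLike.inner_apply, conj_trivial, mul_comm]
      rfl
    _ = 0 := by rw [integral_const_mul, integral_sub_average, mul_zero]

lemma tendsto_eLpNorm_two_birkhoffAverage_sub_average (hf : Ergodic f μ) (hφ : MemLp φ 2 μ) :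
    Tendsto (fun n ↦ eLpNorm (birkhoffAverage ℝ f φ n - fun _ ↦ ⨍ x, φ x ∂μ) 2 μ)
      atTop (𝓝 0) := by
  have hmp := hf.toMeasurePreserving
  let U := (Lp.compMeasurePreservingₗᵢ ℝ (E := ℝ) (p := 2) f hmp).toContinuousLinearMap
  have hproj : (U.eqLocus (1 : Lp ℝ 2 μ →L[ℝ] Lp ℝ 2 μ)).starProjection (hφ.toLp φ) =
      Lp.const 2 μ (⨍ x, φ x ∂μ) :=
    Submodule.eq_starProjection_of_mem_orthogonal rfl
      fun _ hv ↦ inner_toLp_sub_average_eq_zero hf hφ hv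
  rw [← tendsto_birkhoffAverage_compMeasurePreserving_toLp_iff hmp hφ, ← hproj]
  exact U.tendsto_birkhoffAverage_orthogonalProjection
    (LinearIsometry.norm_toContinuousLinearMap_le _) (hφ.toLp φ)

lemma tendsto_eLpNorm_one_birkhoffAverage_sub_average_of_memLp_two (hf : Ergodic f μ)
    (hφ : MemLp φ 2 μ) :
    Tendsto (fun n ↦ eLpNorm (birkhoffAverage ℝ f φ n - fun _ ↦ ⨍ x, φ x ∂μ) 1 μ)
      atTop (𝓝 0) := by
  have hmeas (n : ℕ) : AEStronglyMeasurable
      (birkhoffAverage ℝ f φ n - fun _ ↦ ⨍ x, φ x ∂μ) μ :=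
    ((memLp_birkhoffAverage hf.toMeasurePreserving hφ n).sub (memLp_const _)).aestronglyMeasurable
  refine tendsto_of_tendsto_of_tendsto_of_le_of_le tendsto_const_nhds ?_ (fun _ ↦ zero_le)
    fun n ↦ eLpNorm_le_eLpNorm_mul_rpow_measure_univ one_le_two (hmeas n)
  simpa using ENNReal.Tendsto.mul_const
    (tendsto_eLpNorm_two_birkhoffAverage_sub_average hf hφ) (.inr (by finiteness))

lemma tendsto_eLpNorm_one_birkhoffAverage_sub_average (hf : Ergodic f μ)
    (hφ : Integrable φ μ) :
    Tendsto (fun n ↦ eLpNorm (birkhoffAverage ℝ f φ n - fun _ ↦ ⨍ x, φ x ∂μ) 1 μ)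
      atTop (𝓝 0) := by
  have hmp := hf.toMeasurePreserving
  let S : Set (Lp ℝ 1 μ) := {u | Tendsto
    (birkhoffAverage ℝ (Lp.compMeasurePreserving f hmp) id · u) atTop
      (𝓝 (Lp.const 1 μ (⨍ x, u x ∂μ)))}
  have toLp_mem_iff {ψ : X → ℝ} (hψ : MemLp ψ 1 μ) : hψ.toLp ψ ∈ S ↔
      Tendsto (fun n ↦ eLpNorm (birkhoffAverage ℝ f ψ n - fun _ ↦ ⨍ x, ψ x ∂μ) 1 μ)
        atTop (𝓝 0) := by
    rw [← tendsto_birkhoffAverage_compMeasurePreserving_toLp_iff hmp hψ,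
      ← average_congr hψ.coeFn_toLp]
    rfl
  have simpleFunc_mem (g : Lp.simpleFunc ℝ 1 μ) : (g : Lp ℝ 1 μ) ∈ S := by
    rw [← Lp.simpleFunc.toLp_toSimpleFunc g, Lp.simpleFunc.toLp_eq_toLp, toLp_mem_iff]
    exact tendsto_eLpNorm_one_birkhoffAverage_sub_average_of_memLp_two hf
      ((Lp.simpleFunc.toSimpleFunc g).memLp_of_isFiniteMeasure 2 μ)
  have hS : IsClosed S := isClosed_setOf_tendsto_birkhoffAverage_compMeasurePreserving hmp
  exact (toLp_mem_iff (memLp_one_iff_integrable.2 hφ)).1 <|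
    (Lp.simpleFunc.denseRange ENNReal.one_ne_top).induction_on (p := (· ∈ S)) _ hS
      simpleFunc_mem

lemma tendstoInMeasure_birkhoffAverage (hf : Ergodic f μ) (hφ : Integrable φ μ) :
    TendstoInMeasure μ (birkhoffAverage ℝ f φ) atTop fun _ ↦ ⨍ x, φ x ∂μ :=
  tendstoInMeasure_of_tendsto_eLpNorm one_ne_zero
    (fun n ↦ (memLp_birkhoffAverage hf.toMeasurePreserving
      (memLp_one_iff_integrable.2 hφ) n).aestronglyMeasurable)
    aestronglyMeasurable_const (tendsto_eLpNorm_one_birkhoffAverage_sub_average hf hφ)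

end MeanErgodic

theorem atkinson_returns_general {X : Type*} [TopologicalSpace X] [SecondCountableTopology X]
    [MeasurableSpace X] [OpensMeasurableSpace X] {μ : Measure X} [IsFiniteMeasure μ] {f : X → X}
    (hμ : Ergodic f μ) {φ : X → ℝ} (hφ : Integrable φ μ) (hint : ∫ x, φ x ∂μ = 0) :
    ∀ᵐ x ∂μ, ∃ n : ℕ → ℕ, Tendsto n atTop atTop ∧
      Tendsto (fun k ↦ f^[n k] x) atTop (𝓝 x) ∧
      Tendsto (fun k ↦ birkhoffSum f φ (n k) x) atTop (𝓝 0) := by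
  have havg : TendstoInMeasure μ (birkhoffAverage ℝ f φ) atTop 0 := by
    simpa [average_eq, hint, Pi.zero_def] using tendstoInMeasure_birkhoffAverage hμ hφ
  exact ae_exists_tendsto_birkhoffSum_zero_of_tendstoInMeasure hμ.toMeasurePreserving
    hφ.aemeasurable havg

/-- Atkinson's lemma. If `μ` is an ergodic invariant measure for a
continuous map `f` of a compact metric space and `∫ φ dμ = 0`, then for `μ`-a.e. `x`
there are times `n_k → ∞` with `f^[n_k] x → x` and `S_{n_k} f (x) → 0`. -/
theorem atkinson_returns
    {X : Type*} [MetricSpace X] [CompactSpace X]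
    [MeasurableSpace X] [BorelSpace X]
    (f : X → X) (hf : Continuous f) (φ : X → ℝ) (hφ : Continuous φ)
    (μ : Measure X) [IsProbabilityMeasure μ] (hμ : Ergodic f μ)
    (hint : ∫ x, φ x ∂μ = 0) :
    ∀ᵐ x ∂μ, ∃ n : ℕ → ℕ, Tendsto n atTop atTop ∧
      Tendsto (fun k => f^[n k] x) atTop (𝓝 x) ∧
      Tendsto (fun k => birkhoffSum f φ (n k) x) atTop (𝓝 0) :=
  atkinson_returns_general hμ (hφ.integrable_of_hasCompactSupport (.of_compactSpace φ)) hint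
end

section
/- Let X be a compact metric space, f : X → X continuous, φ : X → ℝ continuous, and let μ be an ergodic f-invariant Borel probability measure with ∫ φ dμ = 0. Then for every x in the topological support of μ and every ε > 0 there exist y ∈ B_ε(x) and an integer n > 0 such that fⁿ(y) ∈ B_ε(x) and S_n f(y) ≥ 0. -/
open MeasureTheory Metric

/-!
Suppose that almost every point of `A` has only negative Birkhoff sums at its returns to `A`. Let
`h y` be the Birkhoff sum of `φ` along the orbit of `y` until its first visit to `A`, which
happens almost surely by ergodicity. Off `A` we have `φ = h - h ∘ f`; on `A`, where `h = 0`,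
negativity at the first return says `φ < h - h ∘ f`. Although `h` need not be integrable, a
coboundary `h - h ∘ f` bounded below by an integrable function is integrable with integral zero
(truncate `h`, then apply Fatou's lemma and dominated convergence). So `∫ φ ≥ 0` forces
`φ = h - h ∘ f` almost everywhere, and `A` is null.
-/

open Filter Set Topology TopologicalSpace

section Truncation

/-- The truncation of the real number `a` to the interval `[-M, M]`, for `0 ≤ M`. -/
def truncate (M a : ℝ) : ℝ := max (min a M) (-M)

lemma continuous_truncate (M : ℝ) : Continuous (truncate M) :=
  (continuous_id.min continuous_const).max continuous_const

lemma monotone_truncate (M : ℝ) : Monotone (truncate M) := fun _ _ hab =>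
  max_le_max_right _ (min_le_min_right _ hab)

lemma abs_truncate_le {M : ℝ} (hM : 0 ≤ M) (a : ℝ) : |truncate M a| ≤ M :=
  abs_le.2 ⟨le_max_right _ _, max_le (min_le_right _ _) (neg_le_self hM)⟩

lemma truncate_of_abs_le {M a : ℝ} (ha : |a| ≤ M) : truncate M a = a := by
  rw [truncate, min_eq_left (abs_le.1 ha).2, max_eq_left (abs_le.1 ha).1]

lemma tendsto_truncate (a : ℝ) : Tendsto (fun M => truncate M a) atTop (𝓝 a) :=
  tendsto_const_nhds.congr' <|
    (eventually_ge_atTop |a|).mono fun _ hM => (truncate_of_abs_le hM).symm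

lemma tendsto_truncate_sub_truncate (a b : ℝ) :
    Tendsto (fun n : ℕ => truncate n a - truncate n b) atTop (𝓝 (a - b)) :=
  ((tendsto_truncate a).sub (tendsto_truncate b)).comp tendsto_natCast_atTop_atTop

lemma abs_truncate_sub_truncate_le (M a b : ℝ) : |truncate M a - truncate M b| ≤ |a - b| :=
  (abs_max_sub_max_le_abs ..).trans (abs_inf_sub_inf_le_abs ..)

lemma min_zero_sub_le_truncate_sub_truncate (M a b : ℝ) :
    min 0 (a - b) ≤ truncate M a - truncate M b := by
  rcases le_total b a with hba | hab
  · exact (min_le_left _ _).trans (sub_nonneg.2 (monotone_truncate M hba))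
  · have hle := abs_truncate_sub_truncate_le M a b
    rw [abs_of_nonpos (sub_nonpos.2 hab)] at hle
    exact (min_le_right _ _).trans (neg_le_neg_iff.1 ((neg_le_abs _).trans hle))

end Truncation

section Coboundary

variable {X : Type*} [MeasurableSpace X] {μ : Measure X}

lemma integrable_of_tendsto_of_integral_norm_le {E : Type*} [NormedAddCommGroup E]
    {F : ℕ → X → E} {g : X → E} {C : ℝ} (hF : ∀ n, Integrable (F n) μ)
    (hC : ∀ n, ∫ x, ‖F n x‖ ∂μ ≤ C)
    (hlim : ∀ᵐ x ∂μ, Tendsto (fun n => F n x) atTop (𝓝 (g x))) : Integrable g μ := by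
  have hmeas := fun n => (hF n).aestronglyMeasurable
  have hnorm : ∀ n, eLpNorm (F n) 1 μ ≤ ENNReal.ofReal C := fun n => by
    rw [eLpNorm_one_eq_lintegral_enorm, ← ofReal_integral_norm_eq_lintegral_enorm (hF n)]
    exact ENNReal.ofReal_le_ofReal (hC n)
  refine memLp_one_iff_integrable.1 ⟨aestronglyMeasurable_of_tendsto_ae _ hmeas hlim, ?_⟩
  calc eLpNorm g 1 μ
      ≤ liminf (fun n => eLpNorm (F n) 1 μ) atTop :=
        Lp.eLpNorm_lim_le_liminf_eLpNorm hmeas g hlim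
    _ ≤ liminf (fun _ : ℕ => ENNReal.ofReal C) atTop := liminf_le_liminf (.of_forall hnorm)
    _ < ⊤ := by simp only [liminf_const, ENNReal.ofReal_lt_top]

lemma integral_sub_comp_eq_zero {E : Type*} [NormedAddCommGroup E] [NormedSpace ℝ E] {f : X → X}
    {h : X → E} (hf : MeasurePreserving f μ μ) (hh : Integrable h μ) :
    ∫ x, (h x - h (f x)) ∂μ = 0 := by
  have hcomp : ∫ x, h (f x) ∂μ = ∫ x, h x ∂μ := by
    rw [← integral_map hf.aemeasurable (hf.map_eq.symm ▸ hh.aestronglyMeasurable), hf.map_eq]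
  calc ∫ x, (h x - h (f x)) ∂μ = ∫ x, h x ∂μ - ∫ x, h (f x) ∂μ :=
        integral_sub hh (hf.integrable_comp_of_integrable hh)
    _ = 0 := by rw [hcomp, sub_self]

variable {f : X → X} {h φ : X → ℝ}

lemma integral_abs_sub_comp_le (hf : MeasurePreserving f μ μ) (hh : Integrable h μ)
    (hφ : Integrable φ μ) (hle : ∀ᵐ x ∂μ, -|φ x| ≤ h x - h (f x)) :
    ∫ x, |h x - h (f x)| ∂μ ≤ 2 * ∫ x, |φ x| ∂μ := by
  have hg : Integrable (fun x => h x - h (f x)) μ := hh.sub (hf.integrable_comp_of_integrable hh)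
  have hφ' : Integrable (fun x => 2 * |φ x|) μ := hφ.abs.const_mul 2
  calc ∫ x, |h x - h (f x)| ∂μ
      ≤ ∫ x, ((h x - h (f x)) + 2 * |φ x|) ∂μ := by
        refine integral_mono_ae hg.abs (hg.add hφ') ?_
        filter_upwards [hle] with x hx
        exact abs_le'.2 ⟨by linarith [abs_nonneg (φ x)], by linarith⟩
    _ = 2 * ∫ x, |φ x| ∂μ := by
        rw [integral_add hg hφ', integral_sub_comp_eq_zero hf hh, zero_add, integral_const_mul]

variable [IsFiniteMeasure μ]

lemma integrable_truncate_comp (hh : AEStronglyMeasurable h μ) (n : ℕ) :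
    Integrable (fun x => truncate n (h x)) μ :=
  .of_bound ((continuous_truncate n).comp_aestronglyMeasurable hh) n
    (.of_forall fun x => abs_truncate_le n.cast_nonneg (h x))

lemma integrable_sub_comp_of_ae_le (hf : MeasurePreserving f μ μ)
    (hh : AEStronglyMeasurable h μ) (hφ : Integrable φ μ)
    (hle : ∀ᵐ x ∂μ, φ x ≤ h x - h (f x)) : Integrable (fun x => h x - h (f x)) μ := by
  have hT := integrable_truncate_comp hh
  refine integrable_of_tendsto_of_integral_norm_le (C := 2 * ∫ x, |φ x| ∂μ)
    (fun n => (hT n).sub (hf.integrable_comp_of_integrable (hT n)))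
    (fun n => integral_abs_sub_comp_le hf (hT n) hφ ?_)
    (.of_forall fun x => tendsto_truncate_sub_truncate (h x) (h (f x)))
  filter_upwards [hle] with x hx
  calc -|φ x| ≤ min 0 (h x - h (f x)) :=
        le_min (neg_nonpos.2 (abs_nonneg _)) ((neg_abs_le _).trans hx)
    _ ≤ truncate n (h x) - truncate n (h (f x)) := min_zero_sub_le_truncate_sub_truncate ..

lemma integral_sub_comp_eq_zero_of_integrable_sub (hf : MeasurePreserving f μ μ)
    (hh : AEStronglyMeasurable h μ) (hg : Integrable (fun x => h x - h (f x)) μ) :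
    ∫ x, (h x - h (f x)) ∂μ = 0 := by
  have hT := integrable_truncate_comp hh
  have hlim := tendsto_integral_of_dominated_convergence (fun x => |h x - h (f x)|)
    (fun n => ((hT n).sub (hf.integrable_comp_of_integrable (hT n))).aestronglyMeasurable) hg.abs
    (fun n => .of_forall fun x => abs_truncate_sub_truncate_le n (h x) (h (f x)))
    (.of_forall fun x => tendsto_truncate_sub_truncate (h x) (h (f x)))
  refine tendsto_nhds_unique hlim (tendsto_const_nhds.congr fun n => ?_)
  exact (integral_sub_comp_eq_zero hf (hT n)).symm

lemma ae_eq_sub_comp_of_ae_le (hf : MeasurePreserving f μ μ)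
    (hh : AEStronglyMeasurable h μ) (hφ : Integrable φ μ) (hφ0 : 0 ≤ ∫ x, φ x ∂μ)
    (hle : ∀ᵐ x ∂μ, φ x ≤ h x - h (f x)) : ∀ᵐ x ∂μ, φ x = h x - h (f x) := by
  have hg := integrable_sub_comp_of_ae_le hf hh hφ hle
  have hg0 := integral_sub_comp_eq_zero_of_integrable_sub hf hh hg
  exact (integral_eq_iff_of_ae_le hφ hg hle).1
    ((integral_mono_ae hφ hg hle).antisymm (hg0.trans_le hφ0))

end Coboundary

section Hitting

variable {X M : Type*} {f : X → X} {A : Set X} {x : X}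

/-- The first time `n ≥ 0` at which the orbit of `x` under `f` is in `A`, and `0` if it never
meets `A`. -/
noncomputable def hittingTime (f : X → X) (A : Set X) (x : X) : ℕ := sInf {n | f^[n] x ∈ A}

/-- The Birkhoff sum of `φ` along the orbit of `x` up to, and excluding, its first visit to `A`. -/
noncomputable def hittingSum [AddCommMonoid M] (f : X → X) (A : Set X) (φ : X → M) (x : X) : M :=
  birkhoffSum f φ (hittingTime f A x) x

lemma iterate_hittingTime_mem (hx : ∃ n, f^[n] x ∈ A) : f^[hittingTime f A x] x ∈ A :=
  Nat.sInf_mem hx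

lemma hittingTime_of_mem (hx : x ∈ A) : hittingTime f A x = 0 := Nat.sInf_eq_zero.2 (.inl hx)

lemma hittingTime_of_notMem (hx : x ∉ A) (hfx : ∃ n, f^[n] (f x) ∈ A) :
    hittingTime f A x = hittingTime f A (f x) + 1 := by
  refine IsLeast.csInf_eq ⟨iterate_hittingTime_mem hfx, ?_⟩
  rintro (_ | n) hn
  · exact absurd hn hx
  · exact Nat.succ_le_succ (Nat.sInf_le hn)

lemma hittingTime_of_mem_disjointed {n : ℕ}
    (hx : x ∈ disjointed (fun k => f^[k] ⁻¹' A) n) : hittingTime f A x = n := by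
  rw [disjointed_eq_inter_compl] at hx
  refine IsLeast.csInf_eq ⟨hx.1, fun k hk => not_lt.1 fun hkn => ?_⟩
  exact mem_iInter₂.1 hx.2 k hkn hk

section AddCommMonoid

variable [AddCommMonoid M] {φ : X → M}

lemma hittingSum_of_mem (hx : x ∈ A) : hittingSum f A φ x = 0 := by
  rw [hittingSum, hittingTime_of_mem hx, birkhoffSum_zero]

lemma birkhoffSum_hittingTime_add_one (x : X) :
    birkhoffSum f φ (hittingTime f A (f x) + 1) x = φ x + hittingSum f A φ (f x) :=
  birkhoffSum_succ' ..

lemma hittingSum_of_notMem (hx : x ∉ A) (hfx : ∃ n, f^[n] (f x) ∈ A) :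
    hittingSum f A φ x = φ x + hittingSum f A φ (f x) := by
  rw [← birkhoffSum_hittingTime_add_one, hittingSum, hittingTime_of_notMem hx hfx]

end AddCommMonoid

lemma lt_hittingSum_sub_of_mem {φ : X → ℝ} (hx : x ∈ A) (hfx : ∃ n, f^[n] (f x) ∈ A)
    (hneg : ∀ n, 0 < n → f^[n] x ∈ A → birkhoffSum f φ n x < 0) :
    φ x < hittingSum f A φ x - hittingSum f A φ (f x) := by
  have hreturn := hneg (hittingTime f A (f x) + 1) (Nat.succ_pos _) (iterate_hittingTime_mem hfx)
  rw [birkhoffSum_hittingTime_add_one] at hreturn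
  rw [hittingSum_of_mem hx]
  linarith

variable [MeasurableSpace X] {μ : Measure X}

lemma aestronglyMeasurable_birkhoffSum [TopologicalSpace M] [AddCommMonoid M] [ContinuousAdd M]
    {φ : X → M} (hf : Measure.QuasiMeasurePreserving f μ μ) (hφ : AEStronglyMeasurable φ μ)
    (n : ℕ) : AEStronglyMeasurable (birkhoffSum f φ n) μ :=
  Finset.aestronglyMeasurable_fun_sum _ fun k _ =>
    hφ.comp_quasiMeasurePreserving (hf.iterate k)

lemma aestronglyMeasurable_hittingSum [TopologicalSpace M] [PseudoMetrizableSpace M]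
    [AddCommMonoid M] [ContinuousAdd M] {φ : X → M} (hf : Measure.QuasiMeasurePreserving f μ μ)
    (hφ : AEStronglyMeasurable φ μ) (hA : NullMeasurableSet A μ)
    (hhit : ∀ᵐ x ∂μ, ∃ n, f^[n] x ∈ A) : AEStronglyMeasurable (hittingSum f A φ) μ := by
  set s := disjointed fun n => f^[n] ⁻¹' A
  have hs : ∀ n, NullMeasurableSet (s n) μ :=
    NullMeasurableSet.disjointed fun n => hA.preimage (hf.iterate n)
  have hcover : ∀ᵐ x ∂μ, x ∈ ⋃ n, s n := by
    filter_upwards [hhit] with x hx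
    simpa only [s, iUnion_disjointed, mem_iUnion, mem_preimage] using hx
  rw [← Measure.restrict_eq_self_of_ae_mem hcover, aestronglyMeasurable_iUnion_iff]
  refine fun n => (aestronglyMeasurable_birkhoffSum hf hφ n).restrict.congr ?_
  filter_upwards [ae_restrict_mem₀ (hs n)] with x hx
  rw [hittingSum, hittingTime_of_mem_disjointed hx]

lemma ae_exists_iterate_mem_of_ergodic [IsFiniteMeasure μ] (hf : Ergodic f μ)
    (hA : NullMeasurableSet A μ) (hA0 : μ A ≠ 0) : ∀ᵐ x ∂μ, ∃ n, f^[n] x ∈ A := by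
  set B := ⋃ n, f^[n] ⁻¹' A
  have hB : NullMeasurableSet B μ :=
    .iUnion fun n => hA.preimage (hf.quasiMeasurePreserving.iterate n)
  have hfB : f ⁻¹' B ⊆ B := fun x hx =>
    have ⟨n, hn⟩ := mem_iUnion.1 hx
    mem_iUnion.2 ⟨n + 1, hn⟩
  have hAB : A ⊆ B := subset_iUnion (fun n => f^[n] ⁻¹' A) 0
  rcases hf.ae_empty_or_univ_of_preimage_ae_le hB hfB.eventuallyLE with hempty | huniv
  · exact absurd (measure_mono_null hAB (ae_eq_empty.1 hempty)) hA0
  · filter_upwards [eventuallyEq_univ.1 huniv] with x hx using mem_iUnion.1 hx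

end Hitting

theorem support_point_nonneg_return_general {X : Type*} [MeasurableSpace X] {μ : Measure X}
    [IsFiniteMeasure μ] {f : X → X} (hf : Ergodic f μ) {φ : X → ℝ} (hφ : Integrable φ μ)
    (hφ0 : 0 ≤ ∫ x, φ x ∂μ) {A : Set X} (hA : NullMeasurableSet A μ) (hA0 : μ A ≠ 0) :
    ∃ᵐ y ∂μ, y ∈ A ∧ ∃ n : ℕ, 0 < n ∧ f^[n] y ∈ A ∧ 0 ≤ birkhoffSum f φ n y := by
  have hhit := ae_exists_iterate_mem_of_ergodic hf hA hA0
  have hhit_f : ∀ᵐ y ∂μ, ∃ n, f^[n] (f y) ∈ A := hf.quasiMeasurePreserving.ae hhit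
  by_contra hfreq
  have hneg : ∀ᵐ y ∂μ, y ∈ A → ∀ n, 0 < n → f^[n] y ∈ A → birkhoffSum f φ n y < 0 := by
    simpa only [not_frequently, not_and, not_exists, not_le] using hfreq
  have hle : ∀ᵐ y ∂μ, φ y ≤ hittingSum f A φ y - hittingSum f A φ (f y) := by
    filter_upwards [hhit_f, hneg] with y hfy hy
    by_cases hyA : y ∈ A
    · exact (lt_hittingSum_sub_of_mem hyA hfy (hy hyA)).le
    · exact (eq_sub_of_add_eq (hittingSum_of_notMem hyA hfy).symm).le
  have hmeas := aestronglyMeasurable_hittingSum hf.quasiMeasurePreserving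
    hφ.aestronglyMeasurable hA hhit
  have heq := ae_eq_sub_comp_of_ae_le hf.toMeasurePreserving hmeas hφ hφ0 hle
  refine hA0 (measure_eq_zero_iff_ae_notMem.2 ?_)
  filter_upwards [hhit_f, hneg, heq] with y hfy hy hyeq hyA
  exact (lt_hittingSum_sub_of_mem hyA hfy (hy hyA)).ne hyeq

/-- If `μ` is ergodic with `∫ φ dμ = 0`, then near any point `x` of the
topological support of `μ` (i.e. every ball around `x` has positive measure) and any
`ε > 0`, there are `y ∈ B_ε(x)` and `n > 0` with `f^[n] y ∈ B_ε(x)` and `S_n f (y) ≥ 0`. -/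
theorem support_point_nonneg_return
    {X : Type*} [MetricSpace X] [CompactSpace X]
    [MeasurableSpace X] [BorelSpace X]
    (f : X → X) (hf : Continuous f) (φ : X → ℝ) (hφ : Continuous φ)
    (μ : Measure X) [IsProbabilityMeasure μ] (hμ : Ergodic f μ)
    (hint : ∫ x, φ x ∂μ = 0)
    (x : X) (hx : ∀ ε > 0, 0 < μ (ball x ε)) :
    ∀ ε > 0, ∃ y ∈ ball x ε, ∃ n : ℕ, 0 < n ∧
      f^[n] y ∈ ball x ε ∧ 0 ≤ birkhoffSum f φ n y := fun ε hε =>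
  (support_point_nonneg_return_general hμ (hφ.integrable_of_hasCompactSupport
    (.of_compactSpace φ)) hint.ge measurableSet_ball.nullMeasurableSet (hx ε hε).ne').exists
end

section
/- Let X be a nonempty compact metric space, f : X → X continuous, and φ : X → ℝ continuous. Then limsup_{n→∞} max_{x∈X} (1/n) S_n f(x) = sup_{μ ∈ M_inv(f)} ∫ φ dμ. -/
open MeasureTheory Filter

open BoundedContinuousFunction Set Topology
open scoped NNReal

/-!
If `μ` is invariant, then `∫ φ dμ` is the `μ`-mean of the `n`-th Birkhoff average of `φ`, hence at
most its maximum. Conversely, let `x n` be a maximum point of the `n`-th average, and let `μ` be a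
weak limit of the empirical measures of the orbit segments starting at the points `x n`. Moving
along the orbit by one step changes only the two ends of the segment, so `μ` is invariant, and
`∫ φ dμ` is a limit point of the maxima. It therefore attains the supremum over the invariant
measures, and all limit points of the sequence of maxima agree.
-/

section BirkhoffAverage

theorem birkhoffAverage_comp_apply {α M : Type*} (R : Type*) [DivisionSemiring R] [AddCommMonoid M]
    [Module R M] (f : α → α) (g : α → M) (n : ℕ) (x : α) :
    birkhoffAverage R f (g ∘ f) n x = birkhoffAverage R f g n (f x) := by
  simp only [birkhoffAverage, birkhoffSum, Function.comp_apply, ← Function.iterate_succ_apply,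
    ← Function.iterate_succ_apply']

theorem continuous_birkhoffAverage {X M : Type*} (R : Type*) [DivisionSemiring R]
    [AddCommMonoid M] [Module R M] [TopologicalSpace X] [TopologicalSpace M] [ContinuousAdd M]
    [ContinuousConstSMul R M] {f : X → X} {g : X → M} (hf : Continuous f) (hg : Continuous g)
    (n : ℕ) : Continuous (birkhoffAverage R f g n) :=
  (continuous_finsetSum _ fun k _ ↦ hg.comp (hf.iterate k)).const_smul _

theorem tendsto_birkhoffAverage_apply_sub_birkhoffAverage_seq {α E : Type*} (𝕜 : Type*) [RCLike 𝕜]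
    [NormedAddCommGroup E] [NormedSpace 𝕜 E] {g : α → E} (hg : Bornology.IsBounded (range g))
    (f : α → α) (x : ℕ → α) :
    Tendsto (fun n ↦ birkhoffAverage 𝕜 f g n (f (x n)) - birkhoffAverage 𝕜 f g n (x n))
      atTop (𝓝 0) := by
  obtain ⟨C, hC⟩ := Metric.isBounded_range_iff.1 hg
  refine squeeze_zero_norm (fun n ↦ ?_) (tendsto_const_div_atTop_nhds_zero_nat C)
  rw [← dist_eq_norm, dist_birkhoffAverage_apply_birkhoffAverage]
  gcongr
  exact hC _ _

end BirkhoffAverage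

section MeasurePreserving

variable {α E : Type*} [MeasurableSpace α] {μ : Measure α} {f : α → α}
  [NormedAddCommGroup E] [NormedSpace ℝ E]

theorem integrable_birkhoffAverage (hf : MeasurePreserving f μ μ) {g : α → E}
    (hg : Integrable g μ) (n : ℕ) : Integrable (birkhoffAverage ℝ f g n) μ :=
  (integrable_finsetSum _ fun k _ ↦ (hf.iterate k).integrable_comp_of_integrable hg).smul _

theorem integral_birkhoffAverage (hf : MeasurePreserving f μ μ) {g : α → E}
    (hg : Integrable g μ) {n : ℕ} (hn : n ≠ 0) :
    ∫ x, birkhoffAverage ℝ f g n x ∂μ = ∫ x, g x ∂μ := by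
  have integral_iterate (k : ℕ) : ∫ x, g (f^[k] x) ∂μ = ∫ x, g x ∂μ := by
    have hk := hf.iterate k
    rw [← integral_map hk.aemeasurable (hk.map_eq.symm ▸ hg.aestronglyMeasurable), hk.map_eq]
  have integrable_iterate (k : ℕ) : Integrable (fun x ↦ g (f^[k] x)) μ :=
    (hf.iterate k).integrable_comp_of_integrable hg
  simp only [birkhoffAverage, birkhoffSum, integral_smul]
  rw [integral_finsetSum _ fun k _ ↦ integrable_iterate k]
  simp only [integral_iterate, Finset.sum_const, Finset.card_range, ← Nat.cast_smul_eq_nsmul ℝ]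
  exact inv_smul_smul₀ (Nat.cast_ne_zero.2 hn) _

theorem integral_le_iSup_birkhoffAverage [IsProbabilityMeasure μ] (hf : MeasurePreserving f μ μ)
    {g : α → ℝ} (hg : Integrable g μ) {n : ℕ} (hn : n ≠ 0)
    (hbdd : BddAbove (range (birkhoffAverage ℝ f g n))) :
    ∫ x, g x ∂μ ≤ ⨆ x, birkhoffAverage ℝ f g n x := by
  obtain ⟨x, hx⟩ := exists_integral_le (integrable_birkhoffAverage hf hg n)
  exact (integral_birkhoffAverage hf hg hn).symm.trans_le (hx.trans (le_ciSup hbdd x))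

end MeasurePreserving

section EmpiricalMeasure

variable {X : Type*} [MeasurableSpace X]

/-- The empirical measure `n⁻¹ • ∑ k < n, δ_{f^k x}` of the first `n` points of the orbit of `x`.
It is a finite measure rather than a probability measure because it vanishes for `n = 0`. -/
noncomputable def empiricalMeasure (f : X → X) (n : ℕ) (x : X) : FiniteMeasure X :=
  birkhoffAverage ℝ≥0 f (fun y ↦ (diracProba y).toFiniteMeasure) n x

theorem toMeasure_empiricalMeasure (f : X → X) (n : ℕ) (x : X) :
    (empiricalMeasure f n x : Measure X) =
      (n : ℝ≥0)⁻¹ • ∑ k ∈ Finset.range n, Measure.dirac (f^[k] x) := by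
  simp only [empiricalMeasure, birkhoffAverage, birkhoffSum, FiniteMeasure.toMeasure_smul,
    FiniteMeasure.toMeasure_sum]
  rfl

theorem mass_empiricalMeasure (f : X → X) {n : ℕ} (hn : n ≠ 0) (x : X) :
    (empiricalMeasure f n x).mass = 1 := by
  rw [← ENNReal.coe_inj, FiniteMeasure.ennreal_mass, toMeasure_empiricalMeasure]
  simp [ENNReal.smul_def, ENNReal.coe_inv, hn, ENNReal.inv_mul_cancel]

theorem integral_empiricalMeasure {E : Type*} [NormedAddCommGroup E] [NormedSpace ℝ E]
    [CompleteSpace E] (f : X → X) (n : ℕ) (x : X) {g : X → E} (hg : StronglyMeasurable g) :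
    ∫ y, g y ∂(empiricalMeasure f n x : Measure X) = birkhoffAverage ℝ f g n x := by
  rw [toMeasure_empiricalMeasure, integral_smul_nnreal_measure,
    integral_finsetSum_measure fun k _ ↦ integrable_dirac' hg (by simp)]
  simp [integral_dirac' _ _ hg, birkhoffAverage, birkhoffSum, NNReal.smul_def]

variable [TopologicalSpace X]

theorem tendsto_birkhoffAverage_of_tendsto_empiricalMeasure [OpensMeasurableSpace X] {f : X → X}
    {x : ℕ → X} {l : Filter ℕ} {μ : FiniteMeasure X}
    (hμ : Tendsto (fun n ↦ empiricalMeasure f n (x n)) l (𝓝 μ)) (g : X →ᵇ ℝ) :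
    Tendsto (fun n ↦ birkhoffAverage ℝ f g n (x n)) l (𝓝 (∫ y, g y ∂(μ : Measure X))) := by
  simpa only [integral_empiricalMeasure _ _ _ g.continuous.stronglyMeasurable] using
    FiniteMeasure.tendsto_iff_forall_integral_tendsto.1 hμ g

variable [BorelSpace X]

theorem exists_tendsto_empiricalMeasure [T2Space X] [CompactSpace X] (f : X → X) (x : ℕ → X)
    {U : Ultrafilter ℕ} (hU : (U : Filter ℕ) ≤ atTop) :
    ∃ μ : ProbabilityMeasure X,
      Tendsto (fun n ↦ empiricalMeasure f n (x n)) U (𝓝 μ.toFiniteMeasure) := by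
  have eventually_mass : ∀ᶠ n in U, (empiricalMeasure f n (x n)).mass = 1 :=
    hU ((eventually_ne_atTop 0).mono fun n hn ↦ mass_empiricalMeasure f hn (x n))
  obtain ⟨ν, hν, hlim⟩ :=
    (isCompact_setOfPred_finiteMeasure_eq_of_compactSpace X 1).ultrafilter_le_nhds'
      (U.map fun n ↦ empiricalMeasure f n (x n)) eventually_mass
  obtain ⟨μ, rfl⟩ : ν ∈ range ProbabilityMeasure.toFiniteMeasure := by
    rwa [ProbabilityMeasure.range_toFiniteMeasure]
  exact ⟨μ, hlim⟩

theorem measurePreserving_of_tendsto_empiricalMeasure [HasOuterApproxClosed X] {f : X → X}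
    (hf : Continuous f) {x : ℕ → X} {l : Filter ℕ} [NeBot l] (hl : l ≤ atTop)
    {μ : FiniteMeasure X} (hμ : Tendsto (fun n ↦ empiricalMeasure f n (x n)) l (𝓝 μ)) :
    MeasurePreserving f (μ : Measure X) μ := by
  refine ⟨hf.measurable, ext_of_forall_integral_eq_of_IsFiniteMeasure fun g ↦ ?_⟩
  rw [integral_map hf.aemeasurable g.continuous.aestronglyMeasurable]
  have tendsto_shift : Tendsto (fun n ↦ birkhoffAverage ℝ f g n (f (x n))) l
      (𝓝 (∫ y, g (f y) ∂(μ : Measure X))) := by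
    simp only [← birkhoffAverage_comp_apply]
    exact tendsto_birkhoffAverage_of_tendsto_empiricalMeasure hμ (g.compContinuous ⟨f, hf⟩)
  have tendsto_sub := tendsto_shift.sub (tendsto_birkhoffAverage_of_tendsto_empiricalMeasure hμ g)
  exact sub_eq_zero.1 <| tendsto_nhds_unique tendsto_sub <|
    (tendsto_birkhoffAverage_apply_sub_birkhoffAverage_seq ℝ g.isBounded_range f x).mono_left hl

theorem exists_measurePreserving_tendsto_birkhoffAverage [T2Space X] [CompactSpace X]
    [HasOuterApproxClosed X] {f : X → X} (hf : Continuous f) (x : ℕ → X) {U : Ultrafilter ℕ}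
    (hU : (U : Filter ℕ) ≤ atTop) :
    ∃ μ : Measure X, IsProbabilityMeasure μ ∧ MeasurePreserving f μ μ ∧ ∀ g : X → ℝ,
      Continuous g → Tendsto (fun n ↦ birkhoffAverage ℝ f g n (x n)) U (𝓝 (∫ y, g y ∂μ)) := by
  obtain ⟨μ, hμ⟩ := exists_tendsto_empiricalMeasure f x hU
  exact ⟨μ, inferInstance, measurePreserving_of_tendsto_empiricalMeasure hf hU hμ, fun g hg ↦
    tendsto_birkhoffAverage_of_tendsto_empiricalMeasure hμ (.mkOfCompact ⟨g, hg⟩)⟩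

end EmpiricalMeasure

/-- The set `M_inv(f)` of `f`-invariant probability measures, as a subtype so that it can index a
supremum. Invariance is encoded by `μ.map f = μ`, which presupposes a measurable `f`:
`μ.map f` is `0` when `f` is not a.e.-measurable. -/
abbrev InvariantProbabilityMeasure {X : Type*} [MeasurableSpace X] (f : X → X) : Type _ :=
  {μ : Measure X // IsProbabilityMeasure μ ∧ μ.map f = μ}

theorem limsup_max_birkhoff_eq_sup_invariant_general {X : Type*} [TopologicalSpace X] [T2Space X]
    [CompactSpace X] [HasOuterApproxClosed X] [Nonempty X] [MeasurableSpace X] [BorelSpace X]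
    {f : X → X} (hf : Continuous f) {φ : X → ℝ} (hφ : Continuous φ) :
    Tendsto (fun n : ℕ ↦ ⨆ x, birkhoffAverage ℝ f φ n x) atTop
      (𝓝 (⨆ μ : InvariantProbabilityMeasure f, ∫ x, φ x ∂(μ : Measure X))) := by
  have hcont := continuous_birkhoffAverage ℝ hf hφ
  have integral_le_iSup (ν : InvariantProbabilityMeasure f) {n : ℕ} (hn : n ≠ 0) :
      ∫ y, φ y ∂(ν : Measure X) ≤ ⨆ y, birkhoffAverage ℝ f φ n y :=
    have := ν.2.1
    integral_le_iSup_birkhoffAverage ⟨hf.measurable, ν.2.2⟩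
      (hφ.integrable_of_hasCompactSupport (.of_compactSpace φ)) hn
      (isCompact_range (hcont n)).bddAbove
  have exists_max (n : ℕ) : ∃ x, birkhoffAverage ℝ f φ n x = ⨆ y, birkhoffAverage ℝ f φ n y :=
    (isCompact_range (hcont n)).sSup_mem (range_nonempty _)
  choose x hx using exists_max
  refine (tendsto_iff_ultrafilter _ _ _).2 fun U hU ↦ ?_
  obtain ⟨μ, hμ, hfμ, hlim⟩ := exists_measurePreserving_tendsto_birkhoffAverage hf x hU
  have tendsto_iSup : Tendsto (fun n ↦ ⨆ y, birkhoffAverage ℝ f φ n y) U (𝓝 (∫ y, φ y ∂μ)) := by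
    simpa only [hx] using hlim φ hφ
  have isGreatest_integral : IsGreatest
      (range fun ν : InvariantProbabilityMeasure f ↦ ∫ y, φ y ∂(ν : Measure X)) (∫ y, φ y ∂μ) := by
    refine ⟨⟨⟨μ, hμ, hfμ.map_eq⟩, rfl⟩, forall_mem_range.2 fun ν ↦ ?_⟩
    exact ge_of_tendsto tendsto_iSup <|
      hU ((eventually_ne_atTop 0).mono fun n hn ↦ integral_le_iSup ν hn)
  rwa [iSup, isGreatest_integral.csSup_eq]

/-- For a continuous map `f` of a nonempty compact metric space and a
continuous `φ`, `limsup_n max_x (1/n) S_n f (x) = sup { ∫ φ dμ : μ ∈ M_inv(f) }`. -/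
theorem limsup_max_birkhoff_eq_sup_invariant
    {X : Type*} [MetricSpace X] [CompactSpace X] [Nonempty X]
    [MeasurableSpace X] [BorelSpace X]
    (f : X → X) (hf : Continuous f) (φ : X → ℝ) (hφ : Continuous φ) :
    limsup (fun n : ℕ => ⨆ x : X, birkhoffSum f φ n x / n) atTop =
      ⨆ μ : {μ : Measure X // IsProbabilityMeasure μ ∧ μ.map f = μ},
        ∫ x, φ x ∂(μ : Measure X) := by
  simpa only [birkhoffAverage, smul_eq_mul, ← div_eq_inv_mul] using
    (limsup_max_birkhoff_eq_sup_invariant_general hf hφ).limsup_eq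
end

section
/- Let X be a compact metric space, g : X → X continuous, φ : X → ℝ continuous, and B ⊆ X. Suppose: (i) for every z ∈ B and every n ≥ 1 with gⁿ(z) ∈ B one has S_n g(z) ≤ 0; (ii) for every z ∈ X whose forward g-orbit visits B only finitely many times, limsup_{n→∞} (1/n) S_n g(z) ≤ 0; (iii) there are x₀ ∈ B and n₁ ≥ 1 with g^{n₁}(x₀) = x₀ and S_{n₁} g(x₀) = 0. Then the measure μ₁ = (1/n₁) Σ_{i=0}^{n₁-1} δ_{gⁱ(x₀)}, uniformly distributed on the periodic orbit of x₀, is a φ-maximizing measure for g: ∫ φ dμ ≤ ∫ φ dμ₁ = 0 for every g-invariant Borel probability measure μ. -/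
open MeasureTheory Filter

/-!
For `ε > 0`, every point `z` has some `n` with `S_n φ(z) < n ε`: if the orbit of `z` visits `B`
infinitely often, the Birkhoff sums between visits are nonpositive, so only the contribution up to
the first visit matters, and it is eventually dominated by `n ε`; otherwise the bound on the upper
limit applies. By the maximal ergodic theorem, applied to `ε - φ`, such a pointwise bound forces
`∫ φ dμ ≤ ε` for every invariant probability measure `μ`. On the periodic orbit the integral is a
Birkhoff average over one period, which vanishes.
-/

section PointwiseBounds

variable {X : Type*} {g : X → X} {φ : X → ℝ} {x : X}

theorem birkhoffSum_div_le {C : ℝ} (hC : ∀ y, φ y ≤ C) {n : ℕ} (hn : 1 ≤ n) (x : X) :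
    birkhoffSum g φ n x / n ≤ C := by
  have hn_pos : (0 : ℝ) < n := by exact_mod_cast hn
  rw [div_le_iff₀' hn_pos]
  simpa [birkhoffSum] using Finset.sum_le_card_nsmul (Finset.range n) _ C fun i _ ↦ hC (g^[i] x)

theorem exists_birkhoffSum_lt_of_limsup_lt (hφ : BddAbove (Set.range φ)) {c : ℝ}
    (hx : limsup (fun n : ℕ ↦ birkhoffSum g φ n x / n) atTop < c) :
    ∃ n : ℕ, birkhoffSum g φ n x < n * c := by
  obtain ⟨C, hC⟩ := hφ
  have h_bdd : IsBoundedUnder (· ≤ ·) atTop fun n : ℕ ↦ birkhoffSum g φ n x / n :=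
    isBoundedUnder_of_eventually_le <| (eventually_ge_atTop 1).mono fun n hn ↦
      birkhoffSum_div_le (fun y ↦ hC ⟨y, rfl⟩) hn x
  obtain ⟨n, h_lt, hn⟩ :=
    ((eventually_lt_of_limsup_lt hx h_bdd).and (eventually_ge_atTop 1)).exists
  have hn_pos : (0 : ℝ) < n := by exact_mod_cast hn
  exact ⟨n, (div_lt_iff₀' hn_pos).mp h_lt⟩

theorem exists_birkhoffSum_lt_of_infinite_visits {B : Set X}
    (hret : ∀ z ∈ B, ∀ n : ℕ, 1 ≤ n → g^[n] z ∈ B → birkhoffSum g φ n z ≤ 0)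
    (hx : {n : ℕ | g^[n] x ∈ B}.Infinite) {ε : ℝ} (hε : 0 < ε) :
    ∃ n : ℕ, birkhoffSum g φ n x < n * ε := by
  obtain ⟨m, hm⟩ := hx.nonempty
  obtain ⟨K, hK⟩ := exists_nat_gt (birkhoffSum g φ m x / ε)
  obtain ⟨n, hn, h_lt⟩ := hx.exists_gt (m + K)
  obtain ⟨k, rfl⟩ := Nat.exists_eq_add_of_le (show m ≤ n by omega)
  have h_return : birkhoffSum g φ k (g^[m] x) ≤ 0 := by
    refine hret _ hm k (by omega) ?_
    rwa [← Function.iterate_add_apply, add_comm]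
  refine ⟨m + k, ?_⟩
  calc birkhoffSum g φ (m + k) x
      = birkhoffSum g φ m x + birkhoffSum g φ k (g^[m] x) := birkhoffSum_add ..
    _ ≤ birkhoffSum g φ m x := by linarith
    _ < K * ε := (div_lt_iff₀ hε).mp hK
    _ ≤ (m + k : ℕ) * ε := by gcongr; omega

end PointwiseBounds

section BirkhoffMax

variable {X R : Type*} [AddCommGroup R] [LinearOrder R] {f : X → X} {φ : X → R}

/-- The maximal function `max_{0 ≤ n ≤ N} S_n φ(x)` of Garsia's proof of the maximal ergodic
theorem. The term `n = 0` is included, so that it is nonnegative. -/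
noncomputable def birkhoffMax (f : X → X) (φ : X → R) (N : ℕ) (x : X) : R :=
  partialSups (fun n ↦ birkhoffSum f φ n x) N

theorem birkhoffMax_zero (f : X → X) (φ : X → R) (x : X) : birkhoffMax f φ 0 x = 0 := by
  simp [birkhoffMax]

theorem birkhoffMax_mono (f : X → X) (φ : X → R) (x : X) :
    Monotone fun N ↦ birkhoffMax f φ N x :=
  (partialSups _).monotone

theorem birkhoffMax_nonneg (f : X → X) (φ : X → R) (N : ℕ) (x : X) : 0 ≤ birkhoffMax f φ N x :=
  (birkhoffMax_zero f φ x).symm.trans_le (birkhoffMax_mono f φ x N.zero_le)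

theorem birkhoffMax_succ [IsOrderedAddMonoid R] (f : X → X) (φ : X → R) (N : ℕ)
    (x : X) : birkhoffMax f φ (N + 1) x = max 0 (φ x + birkhoffMax f φ N (f x)) := by
  simp only [birkhoffMax, partialSups_add_one', bot_eq_zero', birkhoffSum_zero,
    Function.comp_def, birkhoffSum_succ', partialSups_const_add]

theorem birkhoffMax_pos_iff {N : ℕ} {x : X} :
    0 < birkhoffMax f φ N x ↔ ∃ n ≤ N, 0 < birkhoffSum f φ n x := by
  simp [birkhoffMax, partialSups_apply]

theorem birkhoffMax_sub_comp_le_indicator [IsOrderedAddMonoid R] (f : X → X) (φ : X → R)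
    (N : ℕ) (x : X) :
    birkhoffMax f φ N x - birkhoffMax f φ N (f x) ≤
      {y | 0 < birkhoffMax f φ N y}.indicator φ x := by
  by_cases hx : 0 < birkhoffMax f φ N x
  · have h_le : birkhoffMax f φ N x ≤ max 0 (φ x + birkhoffMax f φ N (f x)) :=
      (birkhoffMax_mono f φ x N.le_succ).trans_eq (birkhoffMax_succ f φ N x)
    rw [Set.indicator_of_mem (show x ∈ {y | 0 < birkhoffMax f φ N y} from hx)]
    exact sub_le_iff_le_add.mpr ((le_max_iff.mp h_le).resolve_left hx.not_ge)
  · rw [Set.indicator_of_notMem (show x ∉ {y | 0 < birkhoffMax f φ N y} from hx)]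
    exact sub_nonpos.mpr ((not_lt.mp hx).trans (birkhoffMax_nonneg f φ N (f x)))

end BirkhoffMax

section MaximalErgodicTheorem

theorem integral_comp_eq_of_measurePreserving {X Y E : Type*} [MeasurableSpace X]
    [MeasurableSpace Y] [NormedAddCommGroup E] [NormedSpace ℝ E] {μ : Measure X} {ν : Measure Y}
    {f : X → Y} (hf : MeasurePreserving f μ ν) {ψ : Y → E} (hψ : AEStronglyMeasurable ψ ν) :
    ∫ x, ψ (f x) ∂μ = ∫ y, ψ y ∂ν := by
  rw [← integral_map hf.aemeasurable (by rwa [hf.map_eq]), hf.map_eq]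

variable {X : Type*} [MeasurableSpace X] {μ : Measure X} {f : X → X} {φ : X → ℝ}

theorem integrable_birkhoffMax (hf : MeasurePreserving f μ μ) (hφ : Integrable φ μ) (N : ℕ) :
    Integrable (birkhoffMax f φ N) μ := by
  induction N with
  | zero =>
    rw [funext (birkhoffMax_zero f φ)]
    exact integrable_zero X ℝ μ
  | succ N ih =>
    rw [funext (birkhoffMax_succ f φ N)]
    exact (integrable_zero X ℝ μ).sup (hφ.add (hf.integrable_comp_of_integrable ih))

theorem nullMeasurableSet_birkhoffMax_pos (hf : MeasurePreserving f μ μ) (hφ : Integrable φ μ)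
    (N : ℕ) : NullMeasurableSet {x | 0 < birkhoffMax f φ N x} μ :=
  nullMeasurableSet_lt aemeasurable_const (integrable_birkhoffMax hf hφ N).aemeasurable

theorem setIntegral_birkhoffMax_pos_nonneg (hf : MeasurePreserving f μ μ) (hφ : Integrable φ μ)
    (N : ℕ) : 0 ≤ ∫ x in {x | 0 < birkhoffMax f φ N x}, φ x ∂μ := by
  have h_int := integrable_birkhoffMax hf hφ N
  have h_int_comp : Integrable (fun x ↦ birkhoffMax f φ N (f x)) μ :=
    hf.integrable_comp_of_integrable h_int
  have h_meas := nullMeasurableSet_birkhoffMax_pos hf hφ N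
  calc 0 = ∫ x, (birkhoffMax f φ N x - birkhoffMax f φ N (f x)) ∂μ := by
        rw [integral_sub h_int h_int_comp,
          integral_comp_eq_of_measurePreserving hf h_int.aestronglyMeasurable, sub_self]
    _ ≤ ∫ x, {y | 0 < birkhoffMax f φ N y}.indicator φ x ∂μ :=
        integral_mono (h_int.sub h_int_comp) (hφ.indicator₀ h_meas)
          (birkhoffMax_sub_comp_le_indicator f φ N)
    _ = ∫ x in {x | 0 < birkhoffMax f φ N x}, φ x ∂μ := integral_indicator₀ h_meas

/-- The maximal ergodic theorem. -/
theorem setIntegral_exists_birkhoffSum_pos_nonneg (hf : MeasurePreserving f μ μ)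
    (hφ : Integrable φ μ) : 0 ≤ ∫ x in {x | ∃ n, 0 < birkhoffSum f φ n x}, φ x ∂μ := by
  have h_union :
      {x | ∃ n, 0 < birkhoffSum f φ n x} = ⋃ N, {x | 0 < birkhoffMax f φ N x} := by
    ext x
    simp only [Set.mem_iUnion, Set.mem_ofPred_eq, birkhoffMax_pos_iff]
    exact ⟨fun ⟨n, hn⟩ ↦ ⟨n, n, le_rfl, hn⟩, fun ⟨_, n, _, hn⟩ ↦ ⟨n, hn⟩⟩
  have h_mono : Monotone fun N ↦ {x | 0 < birkhoffMax f φ N x} :=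
    fun _ _ hNM x hx ↦ lt_of_lt_of_le hx (birkhoffMax_mono f φ x hNM)
  rw [h_union]
  exact ge_of_tendsto' (tendsto_setIntegral_of_monotone₀
    (nullMeasurableSet_birkhoffMax_pos hf hφ) h_mono hφ.integrableOn)
    (setIntegral_birkhoffMax_pos_nonneg hf hφ)

theorem integral_le_of_ae_exists_birkhoffSum_lt [IsProbabilityMeasure μ]
    (hf : MeasurePreserving f μ μ) (hφ : Integrable φ μ) {c : ℝ}
    (hc : ∀ᵐ x ∂μ, ∃ n : ℕ, birkhoffSum f φ n x < n * c) : ∫ x, φ x ∂μ ≤ c := by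
  let ψ : X → ℝ := (fun _ ↦ c) - φ
  have h_pos : ∀ᵐ x ∂μ, ∃ n, 0 < birkhoffSum f ψ n x := by
    filter_upwards [hc] with x ⟨n, hn⟩
    refine ⟨n, ?_⟩
    rw [birkhoffSum_sub, sub_pos]
    simpa [birkhoffSum] using hn
  have h_nonneg : 0 ≤ ∫ x, ψ x ∂μ := by
    rw [← Measure.restrict_eq_self_of_ae_mem h_pos]
    exact setIntegral_exists_birkhoffSum_pos_nonneg hf ((integrable_const c).sub hφ)
  have h_eq : ∫ x, ψ x ∂μ = c - ∫ x, φ x ∂μ := by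
    simpa [ψ] using integral_sub (integrable_const c) hφ
  linarith

end MaximalErgodicTheorem

section OrbitMeasure

theorem birkhoffSum_apply_of_isPeriodicPt {X M : Type*} [AddCommMonoid M] {g : X → X} {n : ℕ}
    {x : X} (hx : Function.IsPeriodicPt g n x) (F : X → M) :
    birkhoffSum g F n (g x) = birkhoffSum g F n x := by
  cases n with
  | zero => rw [birkhoffSum_zero, birkhoffSum_zero]
  | succ k =>
    rw [birkhoffSum_succ, birkhoffSum_succ', ← Function.iterate_succ_apply, hx.eq, add_comm]

variable {X : Type*} [MeasurableSpace X] {g : X → X} {n : ℕ} {x : X}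

/-- The uniform distribution on the orbit segment `x, g x, …, g^[n - 1] x`, counted with
multiplicity. It is the zero measure for `n = 0`. -/
noncomputable def orbitMeasure (g : X → X) (n : ℕ) (x : X) : Measure X :=
  (n : ENNReal)⁻¹ • ∑ i ∈ Finset.range n, Measure.dirac (g^[i] x)

theorem isProbabilityMeasure_orbitMeasure (hn : n ≠ 0) (g : X → X) (x : X) :
    IsProbabilityMeasure (orbitMeasure g n x) where
  measure_univ := by
    simp [orbitMeasure, ENNReal.inv_mul_cancel (Nat.cast_ne_zero.mpr hn) (ENNReal.natCast_ne_top n)]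

theorem measurePreserving_orbitMeasure (hg : Measurable g) (hx : Function.IsPeriodicPt g n x) :
    MeasurePreserving g (orbitMeasure g n x) (orbitMeasure g n x) where
  measurable := hg
  map_eq := by
    simp only [orbitMeasure, Measure.map_smul, Measure.map_finset_sum hg.aemeasurable,
      Measure.map_dirac' hg, ← Function.iterate_succ_apply', Function.iterate_succ_apply]
    exact congrArg _ (birkhoffSum_apply_of_isPeriodicPt hx Measure.dirac)

section Integral

variable {E : Type*} [NormedAddCommGroup E] {φ : X → E}

theorem integrable_orbitMeasure (hφ : StronglyMeasurable φ) (g : X → X) (n : ℕ) (x : X) :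
    Integrable φ (orbitMeasure g n x) := by
  rcases eq_or_ne n 0 with rfl | hn
  · simp [orbitMeasure]
  · have h_sum : Integrable φ (∑ i ∈ Finset.range n, Measure.dirac (g^[i] x)) :=
      integrable_finsetSum_measure.mpr fun i _ ↦ integrable_dirac' hφ enorm_lt_top
    exact h_sum.smul_measure (ENNReal.inv_ne_top.mpr (Nat.cast_ne_zero.mpr hn))

theorem integral_orbitMeasure [NormedSpace ℝ E] [CompleteSpace E] (hφ : StronglyMeasurable φ)
    (g : X → X) (n : ℕ) (x : X) :
    ∫ y, φ y ∂(orbitMeasure g n x) = birkhoffAverage ℝ g φ n x := by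
  rw [orbitMeasure, integral_smul_measure,
    integral_finsetSum_measure fun i _ ↦ integrable_dirac' hφ enorm_lt_top]
  simp [integral_dirac' φ _ hφ, birkhoffAverage, birkhoffSum]

end Integral

end OrbitMeasure

section Maximizing

variable {X : Type*} [MeasurableSpace X] {g : X → X} {φ : X → ℝ}

/-- `μ` is a `φ`-maximizing measure for `g`: it maximizes the integral of `φ` among the
`g`-invariant probability measures. Only measures for which `φ` is integrable compete, since the
Bochner integral of a nonintegrable function is `0`. -/
structure IsMaximizingMeasure (g : X → X) (φ : X → ℝ) (μ : Measure X) : Prop where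
  isProbabilityMeasure : IsProbabilityMeasure μ
  measurePreserving : MeasurePreserving g μ μ
  integrable : Integrable φ μ
  integral_le (ν : Measure X) [IsProbabilityMeasure ν] :
    MeasurePreserving g ν ν → Integrable φ ν → ∫ y, φ y ∂ν ≤ ∫ y, φ y ∂μ

theorem integral_nonpos_of_birkhoffSum_return_nonpos {B : Set X} (hφ : BddAbove (Set.range φ))
    (hret : ∀ z ∈ B, ∀ n : ℕ, 1 ≤ n → g^[n] z ∈ B → birkhoffSum g φ n z ≤ 0)
    (hfin : ∀ z : X, {n : ℕ | g^[n] z ∈ B}.Finite →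
      limsup (fun n : ℕ ↦ birkhoffSum g φ n z / n) atTop ≤ 0)
    {μ : Measure X} [IsProbabilityMeasure μ] (hg : MeasurePreserving g μ μ)
    (hφ_int : Integrable φ μ) : ∫ y, φ y ∂μ ≤ 0 := by
  refine le_of_forall_gt_imp_ge_of_dense fun ε hε ↦ ?_
  refine integral_le_of_ae_exists_birkhoffSum_lt hg hφ_int (ae_of_all _ fun z ↦ ?_)
  by_cases hz : {n : ℕ | g^[n] z ∈ B}.Finite
  · exact exists_birkhoffSum_lt_of_limsup_lt hφ ((hfin z hz).trans_lt hε)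
  · exact exists_birkhoffSum_lt_of_infinite_visits hret hz hε

theorem periodic_orbit_measure_maximizing_general (hg : Measurable g) (hφ : Measurable φ)
    (hφ_bdd : BddAbove (Set.range φ)) {B : Set X}
    (hret : ∀ z ∈ B, ∀ n : ℕ, 1 ≤ n → g^[n] z ∈ B → birkhoffSum g φ n z ≤ 0)
    (hfin : ∀ z : X, {n : ℕ | g^[n] z ∈ B}.Finite →
      limsup (fun n : ℕ ↦ birkhoffSum g φ n z / n) atTop ≤ 0)
    {x₀ : X} {n₁ : ℕ} (hn₁ : 1 ≤ n₁) (hper : Function.IsPeriodicPt g n₁ x₀)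
    (hsum : birkhoffSum g φ n₁ x₀ = 0) :
    IsMaximizingMeasure g φ (orbitMeasure g n₁ x₀) ∧ ∫ y, φ y ∂(orbitMeasure g n₁ x₀) = 0 := by
  have h_int : ∫ y, φ y ∂(orbitMeasure g n₁ x₀) = 0 := by
    rw [integral_orbitMeasure hφ.stronglyMeasurable, birkhoffAverage, hsum, smul_zero]
  refine ⟨⟨isProbabilityMeasure_orbitMeasure (by omega) g x₀,
    measurePreserving_orbitMeasure hg hper,
    integrable_orbitMeasure hφ.stronglyMeasurable g n₁ x₀, fun ν _ hν hφν ↦ ?_⟩, h_int⟩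
  exact h_int ▸ integral_nonpos_of_birkhoffSum_return_nonpos hφ_bdd hret hfin hν hφν

end Maximizing

/-- Under the hypotheses of Case I, the measure uniformly distributed on
the periodic orbit of `x₀` is a `φ`-maximizing measure for `g`. -/
theorem periodic_orbit_measure_maximizing
    {X : Type*} [MetricSpace X] [CompactSpace X]
    [MeasurableSpace X] [BorelSpace X]
    (g : X → X) (hg : Continuous g) (φ : X → ℝ) (hφ : Continuous φ) (B : Set X)
    (hret : ∀ z ∈ B, ∀ n : ℕ, 1 ≤ n → g^[n] z ∈ B → birkhoffSum g φ n z ≤ 0)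
    (hfin : ∀ z : X, {n : ℕ | g^[n] z ∈ B}.Finite →
      limsup (fun n : ℕ => birkhoffSum g φ n z / n) atTop ≤ 0)
    (x₀ : X) (hx₀ : x₀ ∈ B) (n₁ : ℕ) (hn₁ : 1 ≤ n₁)
    (hper : g^[n₁] x₀ = x₀) (hsum : birkhoffSum g φ n₁ x₀ = 0) :
    (∫ y, φ y ∂((n₁ : ENNReal)⁻¹ •
        ∑ i ∈ Finset.range n₁, Measure.dirac (g^[i] x₀))) = 0 ∧
    ∀ μ : Measure X, IsProbabilityMeasure μ → μ.map g = μ →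
      ∫ y, φ y ∂μ ≤ ∫ y, φ y ∂((n₁ : ENNReal)⁻¹ •
        ∑ i ∈ Finset.range n₁, Measure.dirac (g^[i] x₀)) := by
  obtain ⟨hmax, h_int⟩ := periodic_orbit_measure_maximizing_general hg.measurable hφ.measurable
    (isCompact_range hφ).bddAbove hret hfin hn₁ hper hsum
  exact ⟨h_int, fun μ _ hμ ↦ hmax.integral_le μ ⟨hg.measurable, hμ⟩
    (hφ.integrable_of_hasCompactSupport (.of_compactSpace φ))⟩
end
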